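/- arXiv:1107.5786 — 3 statements merged into one kernel-verified Lean document; each statement's English description precedes it below -/
import Mathlib

section
/- The sequence k^{3+ξ}·f_k converges as k → ∞ to the positive limit L = (2+ξ)·Γ(m+3+ξ+δ) / ((2+ξ+m+δ)·Γ(m+δ)), where Γ denotes the real Gamma function; in particular, writing f_k = φ_k / k^{3+ξ}, the quantities φ_k tend to a positive limit depending only on m, δ, ξ as k → ∞. -/
open Real Filter

/-- The sequence `(f_k)`: `f_k = 0` for `k < m`, `f_m = (2+ξ)/(2+ξ+m+δ)`, and
`f_k = f_{k-1}·(k-1+δ)/(2+ξ+k+δ)` for `k > m`. -/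
noncomputable def f (ξ δ : ℝ) (m : ℕ) : ℕ → ℝ
  | 0 => if m = 0 then (2 + ξ) / (2 + ξ + (m : ℝ) + δ) else 0
  | k + 1 =>
    if k + 1 < m then 0
    else if k + 1 = m then (2 + ξ) / (2 + ξ + (m : ℝ) + δ)
    else f ξ δ m k * ((k : ℝ) + δ) / (2 + ξ + ((k : ℝ) + 1) + δ)

/-!
By Euler's limit formula, `Γ(n + s) ~ n ^ s * Γ(n)` for every real `s`. A sequence with
`u (k + 1) = u k * ((k + a) / (k + b))` is a constant multiple of `Γ(k + a) / Γ(k + b)`, hence of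
order `k ^ (a - b)`; for `f` we have `a = δ` and `b = 3 + ξ + δ`.
-/

open Asymptotics

section GammaGrowth

theorem Gamma_add_natCast {s : ℝ} (hs : ∀ j : ℕ, s ≠ -j) (n : ℕ) :
    Gamma (s + n) = Gamma s * ∏ j ∈ Finset.range n, (s + j) := by
  induction n with
  | zero => simp
  | succ n ih =>
    have hsn : s + n ≠ 0 := fun h => hs n (eq_neg_of_add_eq_zero_left h)
    rw [Nat.cast_add_one, ← add_assoc, Gamma_add_one hsn, ih, Finset.prod_range_succ]
    ring

theorem GammaSeq_mul_Gamma {s : ℝ} (hs : ∀ j : ℕ, s ≠ -j) {n : ℕ} (hn : n ≠ 0) :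
    GammaSeq s n * (Gamma (n + s) * (n + s)) = n ^ s * Gamma n * (Gamma s * n) := by
  have hprod : ∏ j ∈ Finset.range (n + 1), (s + (j : ℝ)) ≠ 0 :=
    Finset.prod_ne_zero_iff.mpr fun j _ h => hs j (eq_neg_of_add_eq_zero_left h)
  have hfactorial : (n.factorial : ℝ) = n * Gamma n := by
    rw [← Gamma_nat_eq_factorial, Gamma_add_one (Nat.cast_ne_zero.mpr hn)]
  calc GammaSeq s n * (Gamma (n + s) * (n + s))
      = GammaSeq s n * (Gamma s * ∏ j ∈ Finset.range (n + 1), (s + j)) := by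
        rw [add_comm (n : ℝ) s, Gamma_add_natCast hs, Finset.prod_range_succ, mul_assoc (Gamma s)]
    _ = n ^ s * n.factorial * Gamma s := by
        rw [GammaSeq]
        field_simp
    _ = n ^ s * Gamma n * (Gamma s * n) := by
        rw [hfactorial]
        ring

theorem isEquivalent_natCast_add (s : ℝ) :
    (fun n : ℕ => (n : ℝ) + s) ~[atTop] fun n => (n : ℝ) :=
  IsEquivalent.refl.add_const_of_norm_tendsto_atTop
    (tendsto_norm_atTop_atTop.comp tendsto_natCast_atTop_atTop)

theorem eventually_natCast_add_pos (s : ℝ) : ∀ᶠ n : ℕ in atTop, 0 < (n : ℝ) + s :=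
  (tendsto_atTop_add_const_right _ s tendsto_natCast_atTop_atTop).eventually_gt_atTop 0

theorem isEquivalent_Gamma_natCast_add_of_ne_neg_natCast {s : ℝ} (hs : ∀ j : ℕ, s ≠ -j) :
    (fun n : ℕ => Gamma (n + s)) ~[atTop] fun n => (n : ℝ) ^ s * Gamma n := by
  have hΓ : Gamma s ≠ 0 := Gamma_ne_zero hs
  have hseq : GammaSeq s ~[atTop] fun _ => Gamma s :=
    (isEquivalent_const_iff_tendsto hΓ).mpr (GammaSeq_tendsto_Gamma s)
  have hratio := (IsEquivalent.refl (u := fun n : ℕ => (n : ℝ) ^ s * Gamma n * (Gamma s * n))).div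
    (hseq.mul (isEquivalent_natCast_add s))
  refine (hratio.congr_left ?_).congr_right ?_
  · filter_upwards [eventually_ne_atTop 0, eventually_natCast_add_pos s,
      (GammaSeq_tendsto_Gamma s).eventually_ne hΓ] with n hn hns hseq_ne
    simp only [Pi.div_apply, Pi.mul_apply]
    rw [← GammaSeq_mul_Gamma hs hn]
    field_simp
  · filter_upwards [eventually_ne_atTop 0] with n hn
    have hn' : (n : ℝ) ≠ 0 := Nat.cast_ne_zero.mpr hn
    simp only [Pi.div_apply, Pi.mul_apply]
    field_simp

theorem isEquivalent_Gamma_natCast_add_of_add_one {s : ℝ}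
    (h : (fun n : ℕ => Gamma (n + (s + 1))) ~[atTop] fun n => (n : ℝ) ^ (s + 1) * Gamma n) :
    (fun n : ℕ => Gamma (n + s)) ~[atTop] fun n => (n : ℝ) ^ s * Gamma n := by
  refine ((h.div (isEquivalent_natCast_add s)).congr_left ?_).congr_right ?_
  · filter_upwards [eventually_natCast_add_pos s] with n hns
    simp only [Pi.div_apply]
    rw [← add_assoc, Gamma_add_one hns.ne', mul_div_cancel_left₀ _ hns.ne']
  · filter_upwards [eventually_ne_atTop 0] with n hn
    have hn' : (n : ℝ) ≠ 0 := Nat.cast_ne_zero.mpr hn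
    simp only [Pi.div_apply]
    rw [rpow_add_one hn']
    field_simp

-- At the poles Euler's formula degenerates to `0 = 0`, so we descend from positive arguments.
theorem isEquivalent_Gamma_natCast_add (s : ℝ) :
    (fun n : ℕ => Gamma (n + s)) ~[atTop] fun n => (n : ℝ) ^ s * Gamma n := by
  obtain ⟨N, hN⟩ := exists_nat_gt (-s)
  induction N generalizing s with
  | zero =>
    refine isEquivalent_Gamma_natCast_add_of_ne_neg_natCast fun j hj => ?_
    have : (0 : ℝ) ≤ j := j.cast_nonneg
    push_cast at hN
    linarith
  | succ N ih =>
    refine isEquivalent_Gamma_natCast_add_of_add_one (ih (s + 1) ?_)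
    push_cast at hN
    linarith

theorem isEquivalent_Gamma_natCast_add_div (a b : ℝ) :
    (fun n : ℕ => Gamma (n + a) / Gamma (n + b)) ~[atTop] fun n => (n : ℝ) ^ (a - b) := by
  refine ((isEquivalent_Gamma_natCast_add a).div
    (isEquivalent_Gamma_natCast_add b)).congr_right ?_
  filter_upwards [eventually_gt_atTop 0] with n hn
  have hn' : (0 : ℝ) < n := Nat.cast_pos.mpr hn
  simp only [Pi.div_apply]
  rw [rpow_sub hn', mul_div_mul_right _ _ (Gamma_pos_of_pos hn').ne']

end GammaGrowth

section GammaRatioRecurrence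

variable {a b : ℝ} {m : ℕ} {u : ℕ → ℝ}

theorem natCast_add_ne_zero_of_le (ha : ∀ j : ℕ, (m : ℝ) + a ≠ -j) {k : ℕ} (hk : m ≤ k) :
    (k : ℝ) + a ≠ 0 := by
  intro h
  apply ha (k - m)
  rw [Nat.cast_sub hk]
  linarith

theorem eq_Gamma_div_Gamma_of_succ_eq (ha : ∀ j : ℕ, (m : ℝ) + a ≠ -j)
    (hb : ∀ j : ℕ, (m : ℝ) + b ≠ -j)
    (hu : ∀ k, m ≤ k → u (k + 1) = u k * ((k + a) / (k + b))) {k : ℕ} (hk : m ≤ k) :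
    u k = u m * Gamma (m + b) / Gamma (m + a) * (Gamma (k + a) / Gamma (k + b)) := by
  induction k, hk using Nat.le_induction with
  | base =>
    have hΓa := Gamma_ne_zero ha
    have hΓb := Gamma_ne_zero hb
    field_simp
  | succ k hk ih =>
    rw [hu k hk, ih, Nat.cast_add_one, add_right_comm, add_right_comm _ 1 b,
      Gamma_add_one (natCast_add_ne_zero_of_le ha hk),
      Gamma_add_one (natCast_add_ne_zero_of_le hb hk), mul_div_mul_comm]
    ring

theorem tendsto_rpow_mul_of_succ_eq (ha : ∀ j : ℕ, (m : ℝ) + a ≠ -j)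
    (hb : ∀ j : ℕ, (m : ℝ) + b ≠ -j)
    (hu : ∀ k, m ≤ k → u (k + 1) = u k * ((k + a) / (k + b))) :
    Tendsto (fun k : ℕ => (k : ℝ) ^ (b - a) * u k) atTop
      (nhds (u m * Gamma (m + b) / Gamma (m + a))) := by
  set L := u m * Gamma (m + b) / Gamma (m + a)
  have hequiv : (fun k : ℕ => (k : ℝ) ^ (b - a) * u k) ~[atTop] fun _ => L := by
    refine ((IsEquivalent.refl (u := fun k : ℕ => (k : ℝ) ^ (b - a) * L)).mul
      (isEquivalent_Gamma_natCast_add_div a b)).congr_left ?_ |>.congr_right ?_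
    · filter_upwards [eventually_ge_atTop m] with k hk
      simp only [Pi.mul_apply]
      rw [eq_Gamma_div_Gamma_of_succ_eq ha hb hu hk, mul_assoc]
    · filter_upwards [eventually_gt_atTop 0] with k hk
      simp only [Pi.mul_apply]
      rw [mul_right_comm, ← rpow_add (Nat.cast_pos.mpr hk), sub_add_sub_cancel, sub_self,
        rpow_zero, one_mul]
  exact hequiv.tendsto_const

end GammaRatioRecurrence

theorem f_self (ξ δ : ℝ) (m : ℕ) : f ξ δ m m = (2 + ξ) / (2 + ξ + m + δ) := by
  cases m <;> simp [f]

theorem f_succ (ξ δ : ℝ) {m k : ℕ} (hk : m ≤ k) :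
    f ξ δ m (k + 1) = f ξ δ m k * ((k + δ) / (k + (3 + ξ + δ))) := by
  rw [f, if_neg (by omega), if_neg (by omega), mul_div_assoc]
  ring_nf

theorem f_asymptotics_general (ξ δ : ℝ) (m : ℕ) (hξ : -2 < ξ) (hδ : -m < δ) :
    Tendsto (fun k : ℕ => (k : ℝ) ^ (3 + ξ) * f ξ δ m k) atTop
      (nhds ((2 + ξ) * Gamma (m + 3 + ξ + δ) / ((2 + ξ + m + δ) * Gamma (m + δ)))) ∧
    0 < (2 + ξ) * Gamma (m + 3 + ξ + δ) / ((2 + ξ + m + δ) * Gamma (m + δ)) := by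
  have hξ' : 0 < 2 + ξ := by linarith
  have ha : 0 < m + δ := by linarith
  have hb : 0 < m + (3 + ξ + δ) := by linarith
  have ne_neg_natCast {x : ℝ} (hx : 0 < x) (j : ℕ) : x ≠ -j := by
    have : (0 : ℝ) ≤ j := j.cast_nonneg
    linarith
  have hlimit : f ξ δ m m * Gamma (m + (3 + ξ + δ)) / Gamma (m + δ) =
      (2 + ξ) * Gamma (m + 3 + ξ + δ) / ((2 + ξ + m + δ) * Gamma (m + δ)) := by
    rw [f_self, div_mul_eq_mul_div, div_div, ← add_assoc, ← add_assoc]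
  rw [← hlimit]
  constructor
  · simpa only [add_sub_cancel_right] using
      tendsto_rpow_mul_of_succ_eq (ne_neg_natCast ha) (ne_neg_natCast hb) fun _ => f_succ ξ δ
  · have hself : 0 < f ξ δ m m := by
      rw [f_self]
      exact div_pos hξ' (by linarith)
    exact div_pos (mul_pos hself (Gamma_pos_of_pos hb)) (Gamma_pos_of_pos ha)

/-- `k^(3+ξ)·f_k` converges, as `k → ∞`, to the positive limit
`L = (2+ξ)·Γ(m+3+ξ+δ)/((2+ξ+m+δ)·Γ(m+δ))`. -/
theorem f_asymptotics (ξ δ : ℝ) (hξ : 0 < ξ) (hδ : 0 < δ) (m : ℕ) (hm : 1 ≤ m) :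
    Tendsto (fun k : ℕ => (k : ℝ) ^ (3 + ξ) * f ξ δ m k) atTop
      (nhds ((2 + ξ) * Real.Gamma ((m : ℝ) + 3 + ξ + δ) /
        ((2 + ξ + (m : ℝ) + δ) * Real.Gamma ((m : ℝ) + δ)))) ∧
    0 < (2 + ξ) * Real.Gamma ((m : ℝ) + 3 + ξ + δ) /
        ((2 + ξ + (m : ℝ) + δ) * Real.Gamma ((m : ℝ) + δ)) := by
  exact f_asymptotics_general ξ δ m (by linarith) (by linarith [m.cast_nonneg (α := ℝ)])
end

section
/- For every real u with 1 < u ≤ 4: the denominators 2+ξ−1/u and 2+ξ−1/F(u) are positive, (1+ξ)/(2+ξ) < F(u) < 1, F(F(u)) > 1, and the exact identity F(F(u)) − 1 = (u − 1) / (ξ·(2+ξ)·u + 1) holds; consequently F(F(u)) − 1 ≤ (u − 1) / (ξ·(2+ξ) + 1). -/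
/-- The map `F(b) = (1+ξ)/(2+ξ−1/b)`. -/
noncomputable def F (ξ b : ℝ) : ℝ := (1 + ξ) / (2 + ξ - 1 / b)

/-!
In the coordinate `t = 1/b` the map `F` is affine, `t ↦ (2 + ξ - t)/(1 + ξ)`, with fixed point `1`
and, for `ξ > -1`, negative slope. Hence `F` exchanges the two sides of `1`, and replacing `b` by
`F(b)` turns the denominator `2 + ξ - 1/b` into `(ξ(2 + ξ) + 1/b)/(1 + ξ)`. Since
`(1 + ξ)² = ξ(2 + ξ) + 1`, subtracting `1` from `F(F(b))` leaves exactly `b - 1` in the numerator.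
-/

section

variable {ξ b : ℝ}

lemma one_div_F (ξ b : ℝ) : 1 / F ξ b = (2 + ξ - 1 / b) / (1 + ξ) :=
  one_div_div _ _

lemma F_lt_one_iff (hden : 0 < 2 + ξ - 1 / b) : F ξ b < 1 ↔ 1 / b < 1 := by
  rw [F, div_lt_one hden]
  constructor <;> intro h <;> linarith

lemma one_lt_F_iff (hden : 0 < 2 + ξ - 1 / b) : 1 < F ξ b ↔ 1 < 1 / b := by
  rw [F, one_lt_div hden]
  constructor <;> intro h <;> linarith

lemma div_lt_F (hξ : -1 < ξ) (hb : 0 < b) (hden : 0 < 2 + ξ - 1 / b) :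
    (1 + ξ) / (2 + ξ) < F ξ b :=
  div_lt_div_of_pos_left (by linarith) hden (sub_lt_self _ (one_div_pos.mpr hb))

lemma F_denom_pos (hξ : -1 < ξ) (hb : 1 ≤ b) : 0 < 2 + ξ - 1 / b := by
  have hinv : 1 / b ≤ 1 := (div_le_one (by linarith)).mpr hb
  linarith

lemma F_F_denom_eq (hξ : 1 + ξ ≠ 0) (b : ℝ) :
    2 + ξ - 1 / F ξ b = (ξ * (2 + ξ) + 1 / b) / (1 + ξ) := by
  rw [one_div_F, eq_div_iff hξ, sub_mul, div_mul_cancel₀ _ hξ]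
  ring

lemma F_F_denom_pos (hξ : 0 ≤ ξ) (hb : 0 < b) : 0 < 2 + ξ - 1 / F ξ b := by
  rw [F_F_denom_eq (by positivity)]
  positivity

lemma F_F_eq_div (hξ : 1 + ξ ≠ 0) (hb : b ≠ 0) :
    F ξ (F ξ b) = (1 + ξ) ^ 2 * b / (ξ * (2 + ξ) * b + 1) :=
  calc F ξ (F ξ b)
    _ = (1 + ξ) / ((ξ * (2 + ξ) + 1 / b) / (1 + ξ)) := by rw [F, F_F_denom_eq hξ]
    _ = (1 + ξ) ^ 2 / (ξ * (2 + ξ) + 1 / b) := by rw [div_div_eq_mul_div, sq]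
    _ = (1 + ξ) ^ 2 * b / (ξ * (2 + ξ) * b + 1) := by
      rw [← mul_div_mul_right _ _ hb, add_mul, one_div_mul_cancel hb]

lemma F_F_sub_one (hξ : 1 + ξ ≠ 0) (hb : b ≠ 0) (hden : ξ * (2 + ξ) * b + 1 ≠ 0) :
    F ξ (F ξ b) - 1 = (b - 1) / (ξ * (2 + ξ) * b + 1) := by
  rw [F_F_eq_div hξ hb, div_sub_one hden]
  ring

lemma sub_one_div_mul_add_one_le {c : ℝ} (hc : 0 ≤ c) (hb : 1 ≤ b) :
    (b - 1) / (c * b + 1) ≤ (b - 1) / (c + 1) := by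
  have hcb : c ≤ c * b := le_mul_of_one_le_right hc hb
  exact div_le_div_of_nonneg_left (by linarith) (by linarith) (by linarith)

end

theorem F_iterate_upper_general {ξ u : ℝ} (hξ : 0 ≤ ξ) (hu : 1 < u) :
    0 < 2 + ξ - 1 / u ∧
    0 < 2 + ξ - 1 / F ξ u ∧
    (1 + ξ) / (2 + ξ) < F ξ u ∧
    F ξ u < 1 ∧
    1 < F ξ (F ξ u) ∧
    F ξ (F ξ u) - 1 = (u - 1) / (ξ * (2 + ξ) * u + 1) ∧
    F ξ (F ξ u) - 1 ≤ (u - 1) / (ξ * (2 + ξ) + 1) := by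
  have u_pos : 0 < u := one_pos.trans hu
  have neg_one_lt : -1 < ξ := by linarith
  have denom_pos : 0 < 2 + ξ - 1 / u := F_denom_pos neg_one_lt hu.le
  have denom_F_pos : 0 < 2 + ξ - 1 / F ξ u := F_F_denom_pos hξ u_pos
  have lower : (1 + ξ) / (2 + ξ) < F ξ u := div_lt_F neg_one_lt u_pos denom_pos
  have F_pos : 0 < F ξ u := lower.trans' (by positivity)
  have F_lt_one : F ξ u < 1 := (F_lt_one_iff denom_pos).mpr ((div_lt_one u_pos).mpr hu)
  have one_lt_F_F : 1 < F ξ (F ξ u) :=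
    (one_lt_F_iff denom_F_pos).mpr ((one_lt_div F_pos).mpr F_lt_one)
  have identity : F ξ (F ξ u) - 1 = (u - 1) / (ξ * (2 + ξ) * u + 1) :=
    F_F_sub_one (by positivity) u_pos.ne' (by positivity)
  exact ⟨denom_pos, denom_F_pos, lower, F_lt_one, one_lt_F_F, identity,
    identity.trans_le (sub_one_div_mul_add_one_le (by positivity) hu.le)⟩

/-- For `1 < u ≤ 4`: the denominators occurring in `F u` and `F (F u)` are positive,
`(1+ξ)/(2+ξ) < F u < 1`, `F (F u) > 1`, the exact identity
`F(F(u)) − 1 = (u − 1)/(ξ·(2+ξ)·u + 1)` holds, and consequently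
`F(F(u)) − 1 ≤ (u − 1)/(ξ·(2+ξ) + 1)`. -/
theorem F_iterate_upper (ξ : ℝ) (hξ : 0 < ξ) (u : ℝ) (hu1 : 1 < u) (hu2 : u ≤ 4) :
    0 < 2 + ξ - 1 / u ∧
    0 < 2 + ξ - 1 / F ξ u ∧
    (1 + ξ) / (2 + ξ) < F ξ u ∧
    F ξ u < 1 ∧
    1 < F ξ (F ξ u) ∧
    F ξ (F ξ u) - 1 = (u - 1) / (ξ * (2 + ξ) * u + 1) ∧
    F ξ (F ξ u) - 1 ≤ (u - 1) / (ξ * (2 + ξ) + 1) :=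
  F_iterate_upper_general hξ.le hu1
end

section
/- Let b_1 be any real number with 1/2 ≤ b_1 < 1 and define the sequence (b_i)_{i ≥ 1} by b_{i+1} = F(F(b_i)). Then for every i ≥ 1 the iterate is well defined with 1/2 ≤ b_i < 1, and 1 − b_i ≤ (1 − b_1) / (ξ·(1+ξ/2) + 1)^{i−1}; in particular, b_i → 1 as i → ∞. -/
open Filter

/-!
The reciprocal of `F ξ x` is affine in `1 / x`, so `F ξ ∘ F ξ` is a Möbius map with fixed point `1`,
and it satisfies `1 - F ξ (F ξ x) = (1 - x) / (ξ * (2 + ξ) * x + 1)`. For `a ≤ x` the denominator is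
at least `ξ * (2 + ξ) * a + 1`, so on `[a, ∞)` with `0 < a ≤ 1` the map does not change the sign of
`1 - x`, does not leave the interval, and contracts the distance to `1` by this factor. The rate in
the theorem is the case `a = 1 / 2`.
-/

section GeometricDecay

variable {u : ℕ → ℝ} {q C l : ℝ}

theorem le_div_pow_of_succ_le_div (hq : 0 < q) (hu : ∀ i, 1 ≤ i → u (i + 1) ≤ u i / q) {i : ℕ}
    (hi : 1 ≤ i) : u i ≤ u 1 / q ^ (i - 1) := by
  induction i, hi using Nat.le_induction with
  | base => simp
  | succ i hi ih =>
    calc u (i + 1) ≤ u i / q := hu i hi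
      _ ≤ u 1 / q ^ (i - 1) / q := by gcongr
      _ = u 1 / q ^ (i + 1 - 1) := by
        rw [div_div, ← pow_succ, Nat.sub_add_cancel hi, Nat.add_sub_cancel]

theorem tendsto_of_abs_sub_le_div_pow (hq : 1 < q)
    (hu : ∀ i, 1 ≤ i → |l - u i| ≤ C / q ^ (i - 1)) : Tendsto u atTop (nhds l) := by
  have bound_tendsto : Tendsto (fun i : ℕ ↦ C / q ^ (i - 1)) atTop (nhds 0) :=
    ((tendsto_pow_atTop_atTop_of_one_lt hq).comp (tendsto_sub_atTop_nat 1)).const_div_atTop C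
  rw [tendsto_iff_dist_tendsto_zero]
  refine squeeze_zero' (.of_forall fun _ ↦ dist_nonneg) ?_ bound_tendsto
  filter_upwards [eventually_ge_atTop 1] with i hi
  rw [dist_comm, Real.dist_eq]
  exact hu i hi

end GeometricDecay

section SecondIterate

variable {ξ a x : ℝ}

theorem two_add_sub_one_div_F (hξ : 1 + ξ ≠ 0) (x : ℝ) :
    2 + ξ - 1 / F ξ x = (ξ * (2 + ξ) + 1 / x) / (1 + ξ) := by
  have reciprocal_affine : 1 / F ξ x = (2 + ξ - 1 / x) / (1 + ξ) := one_div_div _ _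
  rw [reciprocal_affine, eq_div_iff hξ, sub_mul, div_mul_cancel₀ _ hξ]
  ring

theorem one_sub_F_F (hξ : 1 + ξ ≠ 0) (hx : x ≠ 0) (hden : ξ * (2 + ξ) * x + 1 ≠ 0) :
    1 - F ξ (F ξ x) = (1 - x) / (ξ * (2 + ξ) * x + 1) := by
  have second_den : ξ * (2 + ξ) + 1 / x = (ξ * (2 + ξ) * x + 1) / x := by field_simp
  rw [F, two_add_sub_one_div_F hξ, second_den]
  field_simp
  ring

theorem one_sub_F_F_of_pos (hξ : 0 < ξ) (hx : 0 < x) :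
    1 - F ξ (F ξ x) = (1 - x) / (ξ * (2 + ξ) * x + 1) :=
  one_sub_F_F (by positivity) hx.ne' (by positivity)

theorem two_add_sub_one_div_pos (hξ : 0 < 2 + ξ) (hx : 1 / (2 + ξ) < x) : 0 < 2 + ξ - 1 / x :=
  sub_pos.2 ((one_div_lt hξ ((one_div_pos.2 hξ).trans hx)).1 hx)

theorem two_add_sub_one_div_F_pos (hξ : 0 < ξ) (hx : 0 < x) : 0 < 2 + ξ - 1 / F ξ x := by
  rw [two_add_sub_one_div_F (by positivity)]
  positivity

theorem F_F_lt_one_iff (hξ : 0 < ξ) (hx : 0 < x) : F ξ (F ξ x) < 1 ↔ x < 1 := by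
  rw [← sub_pos, one_sub_F_F_of_pos hξ hx, div_pos_iff_of_pos_right (by positivity), sub_pos]

theorem le_F_F (hξ : 0 < ξ) (ha : 0 < a) (ha1 : a ≤ 1) (hax : a ≤ x) : a ≤ F ξ (F ξ x) := by
  have hx : 0 < x := ha.trans_le hax
  have one_le_den : 1 ≤ ξ * (2 + ξ) * x + 1 := le_add_of_nonneg_left (by positivity)
  suffices 1 - F ξ (F ξ x) ≤ 1 - a by linarith
  rw [one_sub_F_F_of_pos hξ hx, div_le_iff₀ (by positivity)]
  calc 1 - x ≤ 1 - a := by gcongr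
    _ ≤ (1 - a) * (ξ * (2 + ξ) * x + 1) := le_mul_of_one_le_right (sub_nonneg.2 ha1) one_le_den

theorem abs_one_sub_F_F_le (hξ : 0 < ξ) (ha : 0 < a) (hax : a ≤ x) :
    |1 - F ξ (F ξ x)| ≤ |1 - x| / (ξ * (2 + ξ) * a + 1) := by
  have hx : 0 < x := ha.trans_le hax
  have den_pos : 0 < ξ * (2 + ξ) * x + 1 := by positivity
  rw [one_sub_F_F_of_pos hξ hx, abs_div, abs_of_pos den_pos]
  gcongr

end SecondIterate

theorem F_iterates_tendsto_one_general {ξ a : ℝ} (hξ : 0 < ξ) (ha : 1 / (2 + ξ) < a) (ha1 : a ≤ 1)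
    {b : ℕ → ℝ} (hb : a ≤ b 1) (hrec : ∀ i, 1 ≤ i → b (i + 1) = F ξ (F ξ (b i))) :
    (∀ i, 1 ≤ i →
      0 < 2 + ξ - 1 / b i ∧
      0 < 2 + ξ - 1 / F ξ (b i) ∧
      a ≤ b i ∧ (b i < 1 ↔ b 1 < 1) ∧
      |1 - b i| ≤ |1 - b 1| / (ξ * (2 + ξ) * a + 1) ^ (i - 1)) ∧
    Tendsto b atTop (nhds 1) := by
  have ha0 : 0 < a := lt_trans (by positivity) ha
  have one_lt_rate : 1 < ξ * (2 + ξ) * a + 1 := lt_add_of_pos_left 1 (by positivity)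
  have le_b : ∀ i, 1 ≤ i → a ≤ b i :=
    Nat.le_induction hb fun i hi ih ↦ hrec i hi ▸ le_F_F hξ ha0 ha1 ih
  have b_pos (i : ℕ) (hi : 1 ≤ i) : 0 < b i := ha0.trans_le (le_b i hi)
  have b_lt_one_iff : ∀ i, 1 ≤ i → (b i < 1 ↔ b 1 < 1) :=
    Nat.le_induction Iff.rfl fun i hi ih ↦
      hrec i hi ▸ (F_F_lt_one_iff hξ (b_pos i hi)).trans ih
  have decay (i : ℕ) (hi : 1 ≤ i) : |1 - b i| ≤ |1 - b 1| / (ξ * (2 + ξ) * a + 1) ^ (i - 1) :=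
    le_div_pow_of_succ_le_div (u := fun i ↦ |1 - b i|) (by positivity)
      (fun i hi ↦ hrec i hi ▸ abs_one_sub_F_F_le hξ ha0 (le_b i hi)) hi
  exact ⟨fun i hi ↦ ⟨two_add_sub_one_div_pos (by positivity) (ha.trans_le (le_b i hi)),
    two_add_sub_one_div_F_pos hξ (b_pos i hi), le_b i hi, b_lt_one_iff i hi, decay i hi⟩,
    tendsto_of_abs_sub_le_div_pow one_lt_rate decay⟩

/-- If `1/2 ≤ b 1 < 1` and `b (i+1) = F (F (b i))` for `i ≥ 1`, then every iterate is
well defined (the denominators occurring in `F (b i)` and `F (F (b i))` are positive) with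
`1/2 ≤ b i < 1`, one has `1 − b i ≤ (1 − b 1)/(ξ·(1+ξ/2)+1)^(i−1)`, and `b i → 1`. -/
theorem F_iterates_tendsto_one (ξ : ℝ) (hξ : 0 < ξ) (b : ℕ → ℝ)
    (hb1 : 1 / 2 ≤ b 1) (hb2 : b 1 < 1)
    (hrec : ∀ i, 1 ≤ i → b (i + 1) = F ξ (F ξ (b i))) :
    (∀ i, 1 ≤ i →
      0 < 2 + ξ - 1 / b i ∧
      0 < 2 + ξ - 1 / F ξ (b i) ∧
      1 / 2 ≤ b i ∧ b i < 1 ∧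
      1 - b i ≤ (1 - b 1) / (ξ * (1 + ξ / 2) + 1) ^ (i - 1)) ∧
    Tendsto b atTop (nhds 1) := by
  obtain ⟨bounds, b_tendsto⟩ := F_iterates_tendsto_one_general hξ
    (one_div_lt_one_div_of_lt two_pos (by linarith)) (by norm_num) hb1 hrec
  refine ⟨fun i hi ↦ ?_, b_tendsto⟩
  obtain ⟨den_pos, den_F_pos, half_le, lt_one_iff, decay⟩ := bounds i hi
  rw [show ξ * (1 + ξ / 2) = ξ * (2 + ξ) * (1 / 2) by ring, ← abs_of_pos (sub_pos.2 hb2)]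
  exact ⟨den_pos, den_F_pos, half_le, lt_one_iff.2 hb2, (le_abs_self _).trans decay⟩
end
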